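/- arXiv:1712.03546 — 7 statements merged into one kernel-verified Lean document; each statement's English description precedes it below -/
import Mathlib

section
/- Let f be a homogeneous polynomial of degree 3 in n variables over ℂ, and let v, w ∈ ℂⁿ. Then f vanishes identically on the span of v and w (i.e. f(s·v + t·w) = 0 for all s, t ∈ ℂ) if and only if the four conditions hold: f(v) = 0, f(w) = 0, Σᵢ wᵢ·(∂f/∂xᵢ)(v) = 0, and Σᵢ vᵢ·(∂f/∂xᵢ)(w) = 0. -/
open MvPolynomial

open scoped Pointwise in
theorem cubic_expand_aux (n : ℕ) (f : MvPolynomial (Fin n) ℂ)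
    (hf : f.IsHomogeneous 3) (v w : Fin n → ℂ) (s t : ℂ) :
    eval (s • v + t • w) f = s ^ 3 * eval v f + s ^ 2 * t * (∑ i, w i * eval v (pderiv i f))
      + s * t ^ 2 * (∑ i, v i * eval w (pderiv i f)) + t ^ 3 * eval w f := by
  have h : f ∈ Submodule.span ℂ ((Set.range (X : Fin n → MvPolynomial (Fin n) ℂ)) ^ 3) := by
    rw [← Submodule.span_pow, ← homogeneousSubmodule_one_eq_span_X, homogeneousSubmodule_one_pow]
    exact hf
  clear hf
  induction h using Submodule.span_induction with
  | mem x hx =>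
    rw [pow_succ, pow_two] at hx
    obtain ⟨_, ⟨_, ⟨i, rfl⟩, _, ⟨j, rfl⟩, rfl⟩, _, ⟨k, rfl⟩, rfl⟩ := hx
    have e : ∀ (q : Fin n → ℂ) (a b : Fin n),
        eval q (pderiv a (X b : MvPolynomial (Fin n) ℂ)) = if a = b then 1 else 0 := by
      intro q a b
      rw [pderiv_X, Pi.single_apply]
      by_cases hab : a = b
      · simp [hab]
      · simp [hab, Ne.symm hab]
    simp [-pderiv_X, e, mul_add, Finset.sum_add_distrib]
    ring
  | zero => simp
  | add x y _ _ hx hy =>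
    simp only [map_add, hx, hy, mul_add, Finset.sum_add_distrib]
    ring
  | smul a x _ hx =>
    have e : ∀ p q : Fin n → ℂ, ∑ i, p i * eval q (pderiv i (a • x))
        = a * ∑ i, p i * eval q (pderiv i x) := by
      intro p q
      rw [Finset.mul_sum]
      refine Finset.sum_congr rfl fun i _ => ?_
      rw [Derivation.map_smul, smul_eval]
      ring
    rw [e, e, smul_eval, smul_eval, smul_eval, hx]
    ring

/-- A homogeneous cubic `f` vanishes identically on the span of
`v` and `w` iff `f(v) = 0`, `f(w) = 0`, `Σᵢ wᵢ ∂ᵢf(v) = 0` and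
`Σᵢ vᵢ ∂ᵢf(w) = 0`. -/
theorem cubic_vanishes_on_span_iff (n : ℕ) (f : MvPolynomial (Fin n) ℂ)
    (hf : f.IsHomogeneous 3) (v w : Fin n → ℂ) :
    (∀ s t : ℂ, eval (s • v + t • w) f = 0) ↔
      (eval v f = 0 ∧ eval w f = 0 ∧
        (∑ i, w i * eval v (pderiv i f)) = 0 ∧
        (∑ i, v i * eval w (pderiv i f)) = 0) := by
  simp only [cubic_expand_aux n f hf v w]
  generalize (∑ i, w i * eval v (pderiv i f)) = A
  generalize (∑ i, v i * eval w (pderiv i f)) = B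
  constructor
  · intro h
    have h1 := h 1 0
    have h2 := h 0 1
    have h3 := h 1 1
    have h4 := h 1 (-1)
    refine ⟨by linear_combination h1, by linear_combination h2, ?_, ?_⟩
    · linear_combination (1/2) * h3 - (1/2) * h4 - h2
    · linear_combination (1/2) * h3 + (1/2) * h4 - h1
  · rintro ⟨h1, h2, h3, h4⟩ s t
    rw [h1, h2, h3, h4]
    ring
end

section
/- Let f be a homogeneous polynomial of degree 3 in n variables over ℂ, and let p, q ∈ ℂⁿ be two singular points of the hypersurface {f = 0}, i.e. f and all its partial derivatives vanish at both p and q. Then f vanishes identically on the span of p and q: f(s·p + t·q) = 0 for all s, t ∈ ℂ. (In particular, any line passing through two singular points of a cubic hypersurface is contained in the hypersurface.) -/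
open MvPolynomial

theorem chain_aux {n : ℕ} (g : Fin n → Polynomial ℂ) (f : MvPolynomial (Fin n) ℂ) :
    Polynomial.derivative (aeval g f) =
      ∑ i, aeval g (pderiv i f) * Polynomial.derivative (g i) := by
  induction f using MvPolynomial.induction_on with
  | C a => simp [MvPolynomial.algebraMap_eq, ← Polynomial.C_eq_algebraMap]
  | add p q hp hq => simp [hp, hq, add_mul, Finset.sum_add_distrib]
  | mul_X p i hp =>
    have key : ∀ j, aeval g (pderiv j (p * X i)) * Polynomial.derivative (g j) =
        (aeval g (pderiv j p) * Polynomial.derivative (g j)) * g i +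
          if j = i then aeval g p * Polynomial.derivative (g i) else 0 := by
      intro j
      rw [pderiv_mul, map_add, map_mul, map_mul, aeval_X]
      by_cases h : j = i
      · subst h
        rw [pderiv_X_self, map_one, if_pos rfl]; ring
      · rw [pderiv_X_of_ne (Ne.symm h), map_zero, if_neg h]; ring
    rw [Finset.sum_congr rfl fun j _ => key j, Finset.sum_add_distrib, ← Finset.sum_mul, ← hp,
      Finset.sum_ite_eq' Finset.univ i, if_pos (Finset.mem_univ i), map_mul, aeval_X,
      Polynomial.derivative_mul]

theorem hom_aux {n m : ℕ} (f : MvPolynomial (Fin n) ℂ) (hf : f.IsHomogeneous m) (s : ℂ)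
    (p : Fin n → ℂ) : eval (s • p) f = s ^ m * eval p f := by
  rw [eval_eq, eval_eq, Finset.mul_sum]
  refine Finset.sum_congr rfl fun d hd => ?_
  have h := hf (mem_support_iff.mp hd)
  rw [Finsupp.weight_apply, Finsupp.sum] at h
  simp only [Pi.smul_apply, smul_eq_mul, mul_pow, Finset.prod_mul_distrib, Finset.prod_pow_eq_pow_sum]
  simp at h
  rw [h]; ring

theorem deg_aux {n m : ℕ} (f : MvPolynomial (Fin n) ℂ) (hf : f.IsHomogeneous m) 
    (g : Fin n → Polynomial ℂ) (hg : ∀ i, (g i).natDegree ≤ 1) : (aeval g f).natDegree ≤ m := by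
  rw [aeval_def, eval₂_eq]
  refine Polynomial.natDegree_sum_le_of_forall_le _ _ fun d hd => ?_
  have h := hf (mem_support_iff.mp hd)
  rw [Finsupp.weight_apply, Finsupp.sum] at h
  simp at h
  rw [← Polynomial.C_eq_algebraMap]
  refine (Polynomial.natDegree_C_mul_le _ _).trans ((Polynomial.natDegree_prod_le _ _).trans ?_)
  rw [← h]
  refine Finset.sum_le_sum fun i _ => Polynomial.natDegree_pow_le.trans ?_
  nlinarith [hg i]

theorem cubic_vanishes_on_line_through_two_singular_points
    (n : ℕ) (f : MvPolynomial (Fin n) ℂ) (hf : f.IsHomogeneous 3)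
    (p q : Fin n → ℂ)
    (hp : eval p f = 0 ∧ ∀ i : Fin n, eval p (pderiv i f) = 0)
    (hq : eval q f = 0 ∧ ∀ i : Fin n, eval q (pderiv i f) = 0) :
    ∀ s t : ℂ, eval (s • p + t • q) f = 0 := by
  intro s t
  have ev : ∀ (g : Fin n → Polynomial ℂ) (x : ℂ) (k : MvPolynomial (Fin n) ℂ),
      (aeval g k).eval x = eval (fun i => (g i).eval x) k := by
    intro g x k
    induction k using MvPolynomial.induction_on with
    | C a => simp [MvPolynomial.algebraMap_eq, ← Polynomial.C_eq_algebraMap]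
    | add p q hp hq => simp [hp, hq]
    | mul_X p i hp => simp [hp]
  set g : Fin n → Polynomial ℂ := fun i =>
    Polynomial.C (t * q i - s * p i) * Polynomial.X + Polynomial.C (s * p i) with hg
  have g0 : (fun i => (g i).eval 0) = s • p := by ext i; simp [hg]
  have g1 : (fun i => (g i).eval 1) = t • q := by ext i; simp [hg]
  have g2 : (fun i => (g i).eval (1/2)) = (1/2 : ℂ) • (s • p + t • q) := by
    ext i; simp [hg]; ring
  have hd := deg_aux f hf g (fun i => Polynomial.natDegree_linear_le)
  have e2 := ev g (1/2) f
  rw [g2, hom_aux f hf] at e2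
  have a0 : (aeval g f).eval 0 = 0 := by rw [ev, g0, hom_aux f hf, hp.1, mul_zero]
  have a1 : (aeval g f).eval 1 = 0 := by rw [ev, g1, hom_aux f hf, hq.1, mul_zero]
  have b0 : (Polynomial.derivative (aeval g f)).eval 0 = 0 := by
    rw [chain_aux, Polynomial.eval_finsetSum]
    refine Finset.sum_eq_zero fun i _ => ?_
    rw [Polynomial.eval_mul, ev, g0, hom_aux _ hf.pderiv, hp.2, mul_zero, zero_mul]
  have b1 : (Polynomial.derivative (aeval g f)).eval 1 = 0 := by
    rw [chain_aux, Polynomial.eval_finsetSum]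
    refine Finset.sum_eq_zero fun i _ => ?_
    rw [Polynomial.eval_mul, ev, g1, hom_aux _ hf.pderiv, hq.2, mul_zero, zero_mul]
  generalize aeval g f = h at *
  have hh := h.as_sum_range' 4 (by omega)
  simp only [Finset.sum_range_succ, Finset.sum_range_zero, zero_add,
    ← Polynomial.C_mul_X_pow_eq_monomial] at hh
  generalize h.coeff 0 = c0 at hh
  generalize h.coeff 1 = c1 at hh
  generalize h.coeff 2 = c2 at hh
  generalize h.coeff 3 = c3 at hh
  subst hh
  simp at a0 a1 b0 b1 e2
  grind
end

section
/- Let f2 and f3 be homogeneous polynomials of degrees 2 and 3 in the variables x0,...,x4 over ℂ, regarded as polynomials in x0,...,x5 not involving x5, and set f = x5·f2 + f3, a homogeneous cubic in six variables. Then for every v ∈ ℂ⁵ and all s, t ∈ ℂ one has f(s·(v,0) + t·e5) = s³·f3(v) + s²·t·f2(v), where (v,0) ∈ ℂ⁶ denotes v with last coordinate 0 and e5 = (0,0,0,0,0,1). Consequently, for v ≠ 0, the line spanned by (v,0) and e5 is contained in the hypersurface {f = 0} if and only if f2(v) = 0 and f3(v) = 0. -/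
open MvPolynomial

/-- For `f = x₅·f₂ + f₃` with `f₂, f₃` homogeneous of degrees 2, 3
in `x₀,…,x₄`, one has `f(s·(v,0) + t·e₅) = s³·f₃(v) + s²·t·f₂(v)`; hence, for
`v ≠ 0`, the line spanned by `(v,0)` and `e₅` lies on `{f = 0}` iff
`f₂(v) = 0` and `f₃(v) = 0`. -/
theorem lines_through_singular_point_equations
    (f2 f3 : MvPolynomial (Fin 5) ℂ)
    (hf2 : f2.IsHomogeneous 2) (hf3 : f3.IsHomogeneous 3)
    (f : MvPolynomial (Fin 6) ℂ)
    (hf : f = X 5 * rename Fin.castSucc f2 + rename Fin.castSucc f3)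
    (e5 : Fin 6 → ℂ) (he5 : e5 = fun i => if i = 5 then 1 else 0) :
    (∀ (v : Fin 5 → ℂ) (s t : ℂ),
        eval (s • (Fin.snoc v 0 : Fin 6 → ℂ) + t • e5) f =
          s ^ 3 * eval v f3 + s ^ 2 * t * eval v f2) ∧
    (∀ v : Fin 5 → ℂ, v ≠ 0 →
        ((∀ s t : ℂ, eval (s • (Fin.snoc v 0 : Fin 6 → ℂ) + t • e5) f = 0) ↔
          (eval v f2 = 0 ∧ eval v f3 = 0))) := by
  have key : ∀ (v : Fin 5 → ℂ) (s t : ℂ),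
        eval (s • (Fin.snoc v 0 : Fin 6 → ℂ) + t • e5) f =
          s ^ 3 * eval v f3 + s ^ 2 * t * eval v f2 := by
    intro v s t
    have h1 : (s • (Fin.snoc v 0 : Fin 6 → ℂ) + t • e5) ∘ Fin.castSucc = s • v := by
      funext i
      have hi : (Fin.castSucc i : Fin 6) ≠ 5 := (Fin.castSucc_lt_last i).ne
      have hs : (Fin.snoc v 0 : Fin 6 → ℂ) (Fin.castSucc i) = v i :=
        Fin.snoc_castSucc (α := fun _ => ℂ) 0 v i
      simp [he5, hi, hs]
    have h2 : (s • (Fin.snoc v 0 : Fin 6 → ℂ) + t • e5) 5 = t := by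
      have hs : (Fin.snoc v 0 : Fin 6 → ℂ) 5 = 0 :=
        Fin.snoc_last (α := fun _ => ℂ) 0 v
      simp [he5, hs]
    have hom : ∀ (p : MvPolynomial (Fin 5) ℂ) (n : ℕ), p.IsHomogeneous n →
        eval (s • v) p = s ^ n * eval v p := by
      intro p n hp
      rw [eval_eq, eval_eq, Finset.mul_sum]
      refine Finset.sum_congr rfl fun d hd => ?_
      have hdeg : ∑ i ∈ d.support, d i = n := by
        have := hp.degree_eq_sum_deg_support hd
        simpa [Finsupp.degree] using this.symm
      simp only [Pi.smul_apply, smul_eq_mul, mul_pow, Finset.prod_mul_distrib,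
        Finset.prod_pow_eq_pow_sum, hdeg]
      ring
    rw [hf, map_add, map_mul, eval_X, eval_rename, eval_rename, h1, h2,
      hom f2 2 hf2, hom f3 3 hf3]
    ring
  refine ⟨key, fun v _ => ⟨fun h => ?_, fun h s t => ?_⟩⟩
  · have h3 : eval v f3 = 0 := by
      have := h 1 0
      rw [key] at this
      simpa using this
    refine ⟨?_, h3⟩
    have := h 1 1
    rw [key] at this
    simpa [h3] using this
  · rw [key, h.1, h.2]
    ring
end

section
/- Let f2 and f3 be homogeneous polynomials of degrees 2 and 3 in the variables x0,...,x4 over ℂ, regarded as polynomials in x0,...,x5 not involving x5, and set f = x5·f2 + f3. Let W ⊆ ℂ⁶ be a 2-dimensional linear subspace containing e5 = (0,0,0,0,0,1) on which f vanishes identically. Then there exists a nonzero v ∈ ℂ⁵ with f2(v) = 0 and f3(v) = 0 such that W is the span of (v,0) and e5; moreover such v is unique up to a nonzero scalar multiple. -/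
open MvPolynomial

/-- For `f = x₅·f₂ + f₃` as before, every 2-dimensional linear
subspace `W ⊆ ℂ⁶` containing `e₅` on which `f` vanishes identically is the
span of `(v,0)` and `e₅` for some nonzero `v ∈ ℂ⁵` with `f₂(v) = f₃(v) = 0`,
and such `v` is unique up to a nonzero scalar. -/
theorem planes_through_singular_point_classification
    (f2 f3 : MvPolynomial (Fin 5) ℂ)
    (hf2 : f2.IsHomogeneous 2) (hf3 : f3.IsHomogeneous 3)
    (f : MvPolynomial (Fin 6) ℂ)
    (hf : f = X 5 * rename Fin.castSucc f2 + rename Fin.castSucc f3)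
    (e5 : Fin 6 → ℂ) (he5 : e5 = fun i => if i = 5 then 1 else 0)
    (W : Submodule ℂ (Fin 6 → ℂ))
    (hdim : Module.finrank ℂ W = 2)
    (he5W : e5 ∈ W)
    (hvanish : ∀ u ∈ W, eval u f = 0) :
    ∃ v : Fin 5 → ℂ, v ≠ 0 ∧ eval v f2 = 0 ∧ eval v f3 = 0 ∧
      W = Submodule.span ℂ {(Fin.snoc v 0 : Fin 6 → ℂ), e5} ∧
      ∀ v' : Fin 5 → ℂ, v' ≠ 0 → eval v' f2 = 0 → eval v' f3 = 0 →
        W = Submodule.span ℂ {(Fin.snoc v' 0 : Fin 6 → ℂ), e5} →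
        ∃ c : ℂ, c ≠ 0 ∧ v' = c • v := by
  have hev : ∀ (v : Fin 5 → ℂ) (t : ℂ),
      eval (Fin.snoc v t : Fin 6 → ℂ) f = t * eval v f2 + eval v f3 := by
    intro v t
    have h1 : (Fin.snoc v t : Fin 6 → ℂ) ∘ Fin.castSucc = v := by
      funext i
      simp
    have h2 : (Fin.snoc v t : Fin 6 → ℂ) 5 = t := Fin.snoc_last (α := fun _ => ℂ) t v
    rw [hf, map_add, map_mul, eval_X, eval_rename, eval_rename, h1, h2]
  have he : e5 = (Fin.snoc (0 : Fin 5 → ℂ) 1 : Fin 6 → ℂ) := by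
    rw [he5]
    funext i
    refine Fin.lastCases ?_ (fun j => ?_) i
    · rw [Fin.snoc_last]; rfl
    · rw [Fin.snoc_castSucc]
      exact if_neg (Fin.castSucc_lt_last j).ne
  have hcomb : ∀ (v : Fin 5 → ℂ) (a b : ℂ),
      a • (Fin.snoc v 0 : Fin 6 → ℂ) + b • e5 = Fin.snoc (a • v) b := by
    intro v a b
    rw [he]
    funext i
    refine Fin.lastCases ?_ (fun j => ?_) i
    · simp only [Pi.add_apply, Pi.smul_apply, Fin.snoc_last]; simp
    · simp only [Pi.add_apply, Pi.smul_apply, Fin.snoc_castSucc]; simp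
  have hinj : ∀ (v v' : Fin 5 → ℂ) (t t' : ℂ),
      (Fin.snoc v t : Fin 6 → ℂ) = Fin.snoc v' t' → v = v' ∧ t = t' := by
    intro v v' t t' h
    exact Fin.snoc_injective2 (α := fun _ => ℂ) h
  have hw : ∃ w ∈ W, w ∉ Submodule.span ℂ {e5} := by
    by_contra! hcon
    have h1 : Module.finrank ℂ W ≤ Module.finrank ℂ (Submodule.span ℂ {e5}) :=
      Submodule.finrank_mono hcon
    have h2 := finrank_span_le_card (R := ℂ) ({e5} : Set (Fin 6 → ℂ))
    simp at h2
    omega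
  obtain ⟨w, hwW, hwn⟩ := hw
  obtain ⟨v, t, rfl⟩ : ∃ (v : Fin 5 → ℂ) (t : ℂ), w = Fin.snoc v t :=
    ⟨Fin.init w, w (Fin.last 5), (Fin.snoc_init_self w).symm⟩
  have hv : v ≠ 0 := by
    rintro rfl
    apply hwn
    rw [Submodule.mem_span_singleton]
    refine ⟨t, ?_⟩
    have := hcomb 0 0 t
    simpa using this
  have hv0 : (Fin.snoc v 0 : Fin 6 → ℂ) ∈ W := by
    have h := hcomb v 1 t
    rw [one_smul, one_smul] at h
    rw [eq_sub_of_add_eq h]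
    exact W.sub_mem hwW (W.smul_mem _ he5W)
  have hv1 : (Fin.snoc v 1 : Fin 6 → ℂ) ∈ W := by
    have h := hcomb v 1 1
    rw [one_smul, one_smul, one_smul] at h
    rw [← h]
    exact W.add_mem hv0 he5W
  have e3 : eval v f3 = 0 := by
    have := hvanish _ hv0
    rw [hev] at this
    simpa using this
  have e2 : eval v f2 = 0 := by
    have := hvanish _ hv1
    rw [hev, e3] at this
    simpa using this
  have hli : LinearIndependent ℂ ![(Fin.snoc v 0 : Fin 6 → ℂ), e5] := by
    rw [LinearIndependent.pair_iff]
    intro a b hab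
    rw [hcomb] at hab
    have h0 : (0 : Fin 6 → ℂ) = Fin.snoc (0 : Fin 5 → ℂ) 0 := by
      have := hcomb 0 0 0
      simpa using this
    rw [h0] at hab
    obtain ⟨h1, h2⟩ := hinj _ _ _ _ hab
    exact ⟨(smul_eq_zero.mp h1).resolve_right hv, h2⟩
  have hW : W = Submodule.span ℂ {(Fin.snoc v 0 : Fin 6 → ℂ), e5} := by
    symm
    apply Submodule.eq_of_le_of_finrank_eq
    · rw [Submodule.span_le]
      rintro x (rfl | rfl)
      · exact hv0
      · exact he5W
    · have h := finrank_span_eq_card hli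
      rw [Matrix.range_cons, Matrix.range_cons, Matrix.range_empty, Set.union_empty,
        Set.singleton_union] at h
      rw [h, hdim]
      rfl
  refine ⟨v, hv, e2, e3, hW, ?_⟩
  intro v' hv' _ _ hW'
  have hm : (Fin.snoc v' 0 : Fin 6 → ℂ) ∈ W := by
    rw [hW']
    exact Submodule.subset_span (Set.mem_insert _ _)
  rw [hW, Submodule.mem_span_pair] at hm
  obtain ⟨a, b, hab⟩ := hm
  rw [hcomb] at hab
  obtain ⟨h1, _⟩ := hinj _ _ _ _ hab
  refine ⟨a, ?_, h1.symm⟩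
  rintro rfl
  apply hv'
  rw [← h1, zero_smul]
end

section
/- Let f be a homogeneous polynomial of degree 3 in six variables over ℂ, and let p, v, w ∈ ℂ⁶ be such that f vanishes identically on the span of p and v, and f vanishes identically on the span of p and w. Then there exists a homogeneous polynomial L of degree 1 in three variables s, t, u over ℂ such that f(s·v + t·w + u·p) = s·t·L(s,t,u) for all s, t, u ∈ ℂ. (This produces the residual line of the plane spanned by p, v, w: the intersection of the cubic {f = 0} with this plane is the union of the two lines through p and a third line {L = 0}.) -/
open MvPolynomial

lemma aux_dvd (i : Fin 3) (g : MvPolynomial (Fin 3) ℂ) :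
    X i ∣ g - aeval (fun j => if j = i then (0 : MvPolynomial (Fin 3) ℂ) else X j) g := by
  induction g using MvPolynomial.induction_on with
  | C a => simp
  | add p q hp hq =>
    rw [map_add, add_sub_add_comm]
    exact dvd_add hp hq
  | mul_X p j hp =>
    rw [map_mul, aeval_X]
    split_ifs with h
    · subst h
      simp
    · rw [← sub_mul]
      exact hp.mul_right _

lemma aux_dvd_of_eval (i : Fin 3) (g : MvPolynomial (Fin 3) ℂ)
    (h : ∀ x : Fin 3 → ℂ, x i = 0 → eval x g = 0) : X i ∣ g := by
  have h1 := aux_dvd i g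
  have h2 : aeval (fun j => if j = i then (0 : MvPolynomial (Fin 3) ℂ) else X j) g = 0 := by
    apply MvPolynomial.funext
    intro x
    rw [map_zero, ← h (fun j => if j = i then 0 else x j) (by simp)]
    rw [aeval_def, eval₂_eq', map_sum, eval_eq']
    refine Finset.sum_congr rfl fun d _ => ?_
    simp only [algebraMap_eq, map_mul, eval_C, map_prod, map_pow]
    congr 1
    refine Finset.prod_congr rfl fun j _ => ?_
    split_ifs <;> simp
  rwa [h2, sub_zero] at h1

lemma aux_hom (i : Fin 3) (q : MvPolynomial (Fin 3) ℂ) (n : ℕ)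
    (h : (X i * q).IsHomogeneous (n + 1)) : q.IsHomogeneous n := by
  intro d hd
  have h1 := @h (Finsupp.single i 1 + d) (by rwa [coeff_X_mul])
  rw [map_add] at h1
  simp [Finsupp.weight_single] at h1
  simpa using by omega

theorem residual_line_of_plane
    (f : MvPolynomial (Fin 6) ℂ) (hf : f.IsHomogeneous 3)
    (p v w : Fin 6 → ℂ)
    (hv : ∀ s t : ℂ, eval (s • p + t • v) f = 0)
    (hw : ∀ s t : ℂ, eval (s • p + t • w) f = 0) :
    ∃ L : MvPolynomial (Fin 3) ℂ, L.IsHomogeneous 1 ∧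
      ∀ s t u : ℂ, eval (s • v + t • w + u • p) f = s * t * eval ![s, t, u] L := by
  obtain ⟨g, hg⟩ : ∃ g : MvPolynomial (Fin 3) ℂ, g = aeval (fun i =>
    (C (v i) * X 0 + C (w i) * X 1 + C (p i) * X 2 : MvPolynomial (Fin 3) ℂ)) f := ⟨_, rfl⟩
  have hgh : g.IsHomogeneous 3 := by
    have := hf.aeval (fun i =>
      (C (v i) * X 0 + C (w i) * X 1 + C (p i) * X 2 : MvPolynomial (Fin 3) ℂ)) (n := 1)
      (fun i => ((isHomogeneous_C_mul_X _ _).add (isHomogeneous_C_mul_X _ _)).add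
        (isHomogeneous_C_mul_X _ _))
    rw [hg]
    simpa using this
  have hge : ∀ x : Fin 3 → ℂ, eval x g = eval (x 0 • v + x 1 • w + x 2 • p) f := by
    intro x
    rw [hg, aeval_def, eval₂_eq', map_sum, eval_eq']
    refine Finset.sum_congr rfl fun d _ => ?_
    simp only [algebraMap_eq, map_mul, eval_C, map_prod, map_pow]
    congr 1
    refine Finset.prod_congr rfl fun j _ => ?_
    simp [mul_comm]
  obtain ⟨q, hq⟩ := aux_dvd_of_eval 0 g (fun x hx => by
    rw [hge, hx, zero_smul, zero_add, add_comm, hw])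
  have h1 : X 1 ∣ g := aux_dvd_of_eval 1 g (fun x hx => by
    rw [hge, hx, zero_smul, add_zero, add_comm, hv])
  rw [hq, X_dvd_mul_iff] at h1
  have h2 : (X 1 : MvPolynomial (Fin 3) ℂ) ∣ q := by
    refine h1.resolve_left fun h => ?_
    rw [X_dvd_X] at h
    exact absurd h (by decide)
  obtain ⟨L, hL⟩ := h2
  refine ⟨L, ?_, fun s t u => ?_⟩
  · apply aux_hom 1
    rw [← hL]
    apply aux_hom 0
    rw [← hq]
    exact hgh
  · have := hge ![s, t, u]
    rw [hq, hL] at this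
    simp only [map_mul, eval_X] at this
    simpa [mul_assoc] using this.symm
end

section
/- Let f be a homogeneous polynomial of degree 3 in the six variables x0,...,x5 over ℂ that vanishes identically on the subspace l = {x0 = x1 = x2 = x3 = 0}, and let g0, g1, g2, g3 be homogeneous degree-2 polynomials in the variables x4, x5 only such that f − Σᵢ₌₀³ xᵢ·gᵢ ∈ (x0,x1,x2,x3)². If additionally all partial derivatives of f vanish at the point e5 = (0,0,0,0,0,1) (so p = [0:...:0:1] is a singular point of {f = 0}), then each gᵢ is divisible by x4, i.e. gᵢ(0,0,0,0,x4,x5) has zero coefficient of x5². -/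
open MvPolynomial

lemma aux_eval_pderiv (e : Fin 6 → ℂ) (h0 : e 0 = 0) (h1 : e 1 = 0) (h2 : e 2 = 0) (h3 : e 3 = 0)
    (h : MvPolynomial (Fin 6) ℂ)
    (hh : h ∈ (Ideal.span {X 0, X 1, X 2, X 3} : Ideal (MvPolynomial (Fin 6) ℂ)) ^ 2)
    (i : Fin 6) : eval e (pderiv i h) = 0 := by
  have key : ∀ a ∈ (Ideal.span {X 0, X 1, X 2, X 3} : Ideal (MvPolynomial (Fin 6) ℂ)),
      eval e a = 0 := by
    intro a ha
    have : (Ideal.span {X 0, X 1, X 2, X 3} : Ideal (MvPolynomial (Fin 6) ℂ)) ≤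
        RingHom.ker (eval e) := by
      rw [Ideal.span_le]
      rintro x (rfl | rfl | rfl | rfl) <;> simp [RingHom.mem_ker, *]
    exact this ha
  rw [pow_two] at hh
  induction hh using Submodule.mul_induction_on' with
  | mem_mul_mem a ha b hb => simp [Derivation.leibniz, key a ha, key b hb]
  | add x _ y _ hx hy => simp [hx, hy]

lemma aux_supp (g : MvPolynomial (Fin 6) ℂ) (hg : g.IsHomogeneous 2)
    (hr : g ∈ Set.range (rename (![4, 5] : Fin 2 → Fin 6))) (m : Fin 6 →₀ ℕ)
    (hm : coeff m g ≠ 0) (h4 : m 4 = 0) : m = Finsupp.single 5 2 := by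
  obtain ⟨p, rfl⟩ := hr
  have hd := hg hm
  obtain ⟨u, hu, -⟩ := coeff_rename_ne_zero _ _ _ hm
  have hz : ∀ i : Fin 6, i ≠ 4 → i ≠ 5 → m i = 0 := by
    intro i hi hi'
    rw [← hu]
    apply Finsupp.mapDomain_notin_range
    rintro ⟨j, rfl⟩
    fin_cases j <;> simp at hi hi'
  rw [Finsupp.weight_apply, Finsupp.sum_fintype _ _ (by simp)] at hd
  simp [Fin.sum_univ_succ, Fin.sum_univ_six] at hd
  have a0 := hz 0 (by decide) (by decide)
  have a1 := hz 1 (by decide) (by decide)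
  have a2 := hz 2 (by decide) (by decide)
  have a3 := hz 3 (by decide) (by decide)
  ext i
  fin_cases i <;> simp_all [Finsupp.single_apply, Fin.sum_univ_succ]

lemma aux_eval (g : MvPolynomial (Fin 6) ℂ) (hg : g.IsHomogeneous 2)
    (hr : g ∈ Set.range (rename (![4, 5] : Fin 2 → Fin 6))) :
    eval (fun i : Fin 6 => if i = 5 then (1 : ℂ) else 0) g =
      coeff (Finsupp.single (5 : Fin 6) 2) g := by
  rw [eval_eq', Finset.sum_eq_single (Finsupp.single (5 : Fin 6) 2)]
  · simp [Fin.prod_univ_succ, Finsupp.single_apply]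
  · intro d hd hne
    have h4 : d 4 ≠ 0 := fun h => hne (aux_supp g hg hr d (mem_support_iff.1 hd) h)
    rw [Finset.prod_eq_zero (Finset.mem_univ 4), mul_zero]
    simp [h4]
  · intro h
    simp [notMem_support_iff.1 h]

lemma aux_dvd_s9 (g : MvPolynomial (Fin 6) ℂ) (h : ∀ m : Fin 6 →₀ ℕ, m 4 = 0 → coeff m g = 0) :
    (X 4 : MvPolynomial (Fin 6) ℂ) ∣ g := by
  rw [X_dvd_iff_modMonomial_eq_zero]
  ext m
  by_cases hm : m 4 = 0
  · rw [coeff_modMonomial_of_not_le, h m hm, coeff_zero]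
    intro hle
    have := hle 4
    simp [hm] at this
  · rw [coeff_modMonomial_of_le, coeff_zero]
    rw [Finsupp.single_le_iff]
    omega

/-- With `f` a homogeneous cubic vanishing on
`l = {x₀ = x₁ = x₂ = x₃ = 0}` and `g₀,…,g₃` homogeneous quadrics in `x₄, x₅`
only with `f − Σ xᵢ·gᵢ ∈ (x₀,…,x₃)²`, if moreover all partial derivatives of
`f` vanish at `e₅ = (0,0,0,0,0,1)`, then each `gᵢ` is divisible by `x₄`,
i.e. the coefficient of `x₅²` in `gᵢ` is zero. -/
theorem g_divisible_by_x4_at_singular_point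
    (f : MvPolynomial (Fin 6) ℂ) (hf : f.IsHomogeneous 3)
    (hl : ∀ x : Fin 6 → ℂ, x 0 = 0 → x 1 = 0 → x 2 = 0 → x 3 = 0 → eval x f = 0)
    (g : Fin 4 → MvPolynomial (Fin 6) ℂ)
    (hg : ∀ i, (g i).IsHomogeneous 2 ∧
          g i ∈ Set.range (rename (![4, 5] : Fin 2 → Fin 6)))
    (hfg : f - ∑ i : Fin 4, X (Fin.castLE (by norm_num) i) * g i ∈
        (Ideal.span {X 0, X 1, X 2, X 3} : Ideal (MvPolynomial (Fin 6) ℂ)) ^ 2)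
    (e5 : Fin 6 → ℂ) (he5 : e5 = fun i => if i = 5 then 1 else 0)
    (hsing : ∀ i : Fin 6, eval e5 (pderiv i f) = 0) :
    ∀ i : Fin 4, (X 4 : MvPolynomial (Fin 6) ℂ) ∣ g i ∧
      coeff (Finsupp.single (5 : Fin 6) 2) (g i) = 0 := by
  have hc : ∀ i : Fin 4, coeff (Finsupp.single (5 : Fin 6) 2) (g i) = 0 := by
    intro j
    rw [← aux_eval _ (hg j).1 (hg j).2, ← he5]
    have z : ∀ i : Fin 6, i ≠ 5 → e5 i = 0 := by
      intro i hi; simp [he5, hi]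
    have h := aux_eval_pderiv e5 (z 0 (by decide)) (z 1 (by decide)) (z 2 (by decide))
      (z 3 (by decide)) _ hfg (Fin.castLE (by norm_num) j)
    have a0 := z 0 (by decide)
    have a1 := z 1 (by decide)
    have a2 := z 2 (by decide)
    have a3 := z 3 (by decide)
    rw [map_sub, map_sub, hsing, Fin.sum_univ_four] at h
    fin_cases j <;> simpa [Derivation.leibniz, pderiv_X, Pi.single_apply, a0, a1, a2, a3] using h
  intro i
  refine ⟨aux_dvd_s9 _ fun m hm => ?_, hc i⟩
  by_contra hne
  have := aux_supp _ (hg i).1 (hg i).2 m hne hm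
  rw [this] at hne
  exact hne (hc i)
end

section
/- Let f be a homogeneous polynomial of degree 3 in six variables over ℂ and suppose all partial derivatives of f vanish at the point e5 = (0,...,0,1) and f(e5) = 0, so that f = x5·f2 + f3 with f2, f3 homogeneous of degrees 2, 3 in x0,...,x4 only. Let q ∈ ℂ⁵ be nonzero with f2(q) = 0 and f3(q) = 0 (so the line through p = [e5] and [q] lies on the cubic). Then for every i = 0,...,4: (∂f/∂xᵢ)(s·(q,0) + t·e5) = s²·(∂f3/∂xᵢ)(q) + s·t·(∂f2/∂xᵢ)(q) for all s, t ∈ ℂ; in particular, every point of the line through (q,0) and e5 other than the point e5 itself is a singular point of {f = 0} if and only if (∂f2/∂xᵢ)(q) = 0 and (∂f3/∂xᵢ)(q) = 0 for all i = 0,...,4. -/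
open MvPolynomial

theorem aux_eval_smul {n d : ℕ} (p : MvPolynomial (Fin n) ℂ) (hp : p.IsHomogeneous d) (s : ℂ)
    (q : Fin n → ℂ) : eval (s • q) p = s ^ d * eval q p := by
  rw [eval_eq, eval_eq, Finset.mul_sum]
  refine Finset.sum_congr rfl fun m hm => ?_
  have h : ∑ i ∈ m.support, m i = d := by
    have := hp (mem_support_iff.mp hm)
    rw [Finsupp.weight_apply] at this
    simpa [Finsupp.sum] using this
  simp only [Pi.smul_apply, smul_eq_mul, mul_pow, Finset.prod_mul_distrib]
  rw [Finset.prod_pow_eq_pow_sum, h]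
  ring

theorem aux_last (p : MvPolynomial (Fin 5) ℂ) :
    pderiv (5 : Fin 6) (rename Fin.castSucc p) = 0 := by
  apply pderiv_eq_zero_of_notMem_vars
  intro h
  have h2 := vars_rename Fin.castSucc p h
  simp only [Finset.mem_image] at h2
  obtain ⟨a, -, ha⟩ := h2
  exact (Fin.castSucc_lt_last a).ne ha

/-- Let `f = x₅·f₂ + f₃` be a homogeneous cubic singular at
`e₅`, and let `q ∈ ℂ⁵ \ {0}` satisfy `f₂(q) = f₃(q) = 0`. Then for
`i = 0,…,4` one has
`∂ᵢf(s·(q,0) + t·e₅) = s²·∂ᵢf₃(q) + s·t·∂ᵢf₂(q)`; in particular every point of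
the line through `(q,0)` and `e₅` other than `e₅` itself is a singular point
of `{f = 0}` iff `∂ᵢf₂(q) = 0` and `∂ᵢf₃(q) = 0` for all `i`. -/
theorem singular_points_on_line_through_singularity
    (f : MvPolynomial (Fin 6) ℂ) (hf : f.IsHomogeneous 3)
    (e5 : Fin 6 → ℂ) (he5 : e5 = fun i => if i = 5 then 1 else 0)
    (hsing : eval e5 f = 0 ∧ ∀ i : Fin 6, eval e5 (pderiv i f) = 0)
    (f2 f3 : MvPolynomial (Fin 5) ℂ)
    (hf2 : f2.IsHomogeneous 2) (hf3 : f3.IsHomogeneous 3)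
    (hdecomp : f = X 5 * rename Fin.castSucc f2 + rename Fin.castSucc f3)
    (q : Fin 5 → ℂ) (hq : q ≠ 0) (hq2 : eval q f2 = 0) (hq3 : eval q f3 = 0) :
    (∀ (i : Fin 5) (s t : ℂ),
        eval (s • (Fin.snoc q 0 : Fin 6 → ℂ) + t • e5) (pderiv i.castSucc f) =
          s ^ 2 * eval q (pderiv i f3) + s * t * eval q (pderiv i f2)) ∧
    ((∀ s t : ℂ, s ≠ 0 →
        eval (s • (Fin.snoc q 0 : Fin 6 → ℂ) + t • e5) f = 0 ∧
        ∀ j : Fin 6,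
          eval (s • (Fin.snoc q 0 : Fin 6 → ℂ) + t • e5) (pderiv j f) = 0) ↔
      (∀ i : Fin 5, eval q (pderiv i f2) = 0 ∧ eval q (pderiv i f3) = 0)) := by
  have hcomp : ∀ s t : ℂ, (s • (Fin.snoc q 0 : Fin 6 → ℂ) + t • e5) ∘ Fin.castSucc = s • q := by
    intro s t
    funext i
    have hi : (i.castSucc : Fin 6) ≠ 5 := (Fin.castSucc_lt_last i).ne
    have h2 : (Fin.snoc q 0 : Fin 6 → ℂ) i.castSucc = q i :=
      Fin.snoc_castSucc (α := fun _ => ℂ) 0 q i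
    simp [he5, hi, h2]
  have hlast : ∀ s t : ℂ, (s • (Fin.snoc q 0 : Fin 6 → ℂ) + t • e5) 5 = t := by
    intro s t
    have h2 : (Fin.snoc q 0 : Fin 6 → ℂ) 5 = 0 :=
      Fin.snoc_last (α := fun _ => ℂ) 0 q
    simp [he5, h2]
  have key : ∀ (i : Fin 5) (s t : ℂ),
        eval (s • (Fin.snoc q 0 : Fin 6 → ℂ) + t • e5) (pderiv i.castSucc f) =
          s ^ 2 * eval q (pderiv i f3) + s * t * eval q (pderiv i f2) := by
    intro i s t
    have hi : (5 : Fin 6) ≠ i.castSucc := (Fin.castSucc_lt_last i).ne'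
    rw [hdecomp, map_add, pderiv_mul, pderiv_X_of_ne hi,
      pderiv_rename (Fin.castSucc_injective 5), pderiv_rename (Fin.castSucc_injective 5)]
    simp only [map_add, map_mul, eval_rename, eval_X, hcomp, hlast, zero_mul, zero_add, map_zero]
    rw [aux_eval_smul _ hf2.pderiv, aux_eval_smul _ hf3.pderiv]
    norm_num
    ring
  refine ⟨key, fun h i => ?_, fun h s t _ => ⟨?_, fun j => ?_⟩⟩
  · have h0 := (h 1 0 one_ne_zero).2 i.castSucc
    have h1 := (h 1 1 one_ne_zero).2 i.castSucc
    rw [key] at h0 h1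
    have h3 : eval q (pderiv i f3) = 0 := by simpa using h0
    refine ⟨?_, h3⟩
    simpa [h3] using h1
  · rw [hdecomp]
    simp only [map_add, map_mul, eval_rename, eval_X, hcomp, hlast]
    rw [aux_eval_smul _ hf2, aux_eval_smul _ hf3, hq2, hq3]
    ring
  · induction j using Fin.lastCases with
    | cast i => rw [key, (h i).1, (h i).2]; ring
    | last =>
      change eval _ (pderiv (5 : Fin 6) f) = 0
      rw [hdecomp, map_add, pderiv_mul, aux_last, aux_last, pderiv_X_self]
      simp only [map_add, map_mul, eval_rename, hcomp, mul_zero, add_zero, one_mul]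
      rw [aux_eval_smul _ hf2, hq2, mul_zero]
end
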